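/- Fix ω0 ∈ ℝ, σ0² > 0, 0 < σH² < σL², and h ∈ (0,1). Define the mixture posterior-mean action a*(s) := (∫ ω·f(s|ω)·φ(ω; ω0, σ0²) dω) / (∫ f(s|ω)·φ(ω; ω0, σ0²) dω) where f(s|ω) := h·φ(s; ω, σH²) + (1−h)·φ(s; ω, σL²). Then the expected quadratic loss under the mixture strictly exceeds the expected quadratic loss attainable if all sources were high quality: ∫∫ (ω − a*(s))²·f(s|ω)·φ(ω; ω0, σ0²) ds dω > σ0²·σH²/(σ0² + σH²). -/

import Mathlib

open MeasureTheory Real Filter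

/-- The Gaussian density with mean `m` and variance `v`. -/
noncomputable def gauss (x m v : ℝ) : ℝ :=
  (Real.sqrt (2 * Real.pi * v))⁻¹ * Real.exp (-(x - m) ^ 2 / (2 * v))

/-- The mixture signal density `f(s|ω) = h·φ(s;ω,vH) + (1−h)·φ(s;ω,vL)`. -/
noncomputable def mixDens (h vH vL s ω : ℝ) : ℝ :=
  h * gauss s ω vH + (1 - h) * gauss s ω vL

/-- The mixture posterior-mean action `a*(s)`. -/
noncomputable def aMix (ω0 v0 vH vL h s : ℝ) : ℝ :=
  (∫ ω : ℝ, ω * (mixDens h vH vL s ω * gauss ω ω0 v0)) /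
    (∫ ω : ℝ, mixDens h vH vL s ω * gauss ω ω0 v0)

lemma gauss_eq (x m v : ℝ) (hv : 0 < v) :
    gauss x m v = ProbabilityTheory.gaussianPDFReal m v.toNNReal x := by
  rw [ProbabilityTheory.gaussianPDFReal, Real.coe_toNNReal v hv.le, gauss]

lemma gauss_pos (x m v : ℝ) (hv : 0 < v) : 0 < gauss x m v := by
  unfold gauss; positivity

lemma gauss_meas {v : ℝ} {α : Type*} [MeasurableSpace α] {f g : α → ℝ}
    (hf : Measurable f) (hg : Measurable g) : Measurable (fun x => gauss (f x) (g x) v) := by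
  unfold gauss; fun_prop

lemma gauss_int0 (m v : ℝ) (hv : 0 < v) :
    Integrable (fun x => gauss x m v) ∧ ∫ x, gauss x m v = 1 := by
  have h0 : v.toNNReal ≠ 0 := (Real.toNNReal_pos.2 hv).ne'
  simp only [gauss_eq _ _ _ hv]
  exact ⟨ProbabilityTheory.integrable_gaussianPDFReal m v.toNNReal,
    ProbabilityTheory.integral_gaussianPDFReal_eq_one m h0⟩

lemma gauss_transfer (m v : ℝ) (hv : 0 < v) (f : ℝ → ℝ)
    (hf : Integrable f (ProbabilityTheory.gaussianReal m v.toNNReal)) :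
    Integrable (fun x => f x * gauss x m v) ∧
      ∫ x, f x * gauss x m v = ∫ x, f x ∂(ProbabilityTheory.gaussianReal m v.toNNReal) := by
  have h0 : v.toNNReal ≠ 0 := (Real.toNNReal_pos.2 hv).ne'
  constructor
  · rw [ProbabilityTheory.gaussianReal_of_var_ne_zero _ h0,
      integrable_withDensity_iff_integrable_smul₀'
        (ProbabilityTheory.measurable_gaussianPDF _ _).aemeasurable
        (by simp [ProbabilityTheory.gaussianPDF])] at hf
    refine hf.congr (Filter.Eventually.of_forall fun x => ?_)
    simp only [ProbabilityTheory.toReal_gaussianPDF, smul_eq_mul, gauss_eq _ _ _ hv]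
    ring
  · rw [ProbabilityTheory.integral_gaussianReal_eq_integral_smul h0]
    simp only [smul_eq_mul, gauss_eq _ _ _ hv, mul_comm]

lemma gauss_int1 (m v : ℝ) (hv : 0 < v) :
    Integrable (fun x => x * gauss x m v) ∧ ∫ x, x * gauss x m v = m := by
  have := gauss_transfer m v hv (fun x => x)
    ((ProbabilityTheory.memLp_id_gaussianReal 1).integrable (by simp))
  refine ⟨this.1, this.2.trans ?_⟩
  exact ProbabilityTheory.integral_id_gaussianReal

lemma gauss_int2 (m v : ℝ) (hv : 0 < v) (c : ℝ) :
    Integrable (fun x => (x - c) ^ 2 * gauss x m v) ∧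
      ∫ x, (x - c) ^ 2 * gauss x m v = v + (m - c) ^ 2 := by
  obtain ⟨i0, e0⟩ := gauss_int0 m v hv
  obtain ⟨i1, e1⟩ := gauss_int1 m v hv
  have hc : Integrable (fun x : ℝ => (x - m) ^ 2) (ProbabilityTheory.gaussianReal m v.toNNReal) :=
    MemLp.integrable_sq ((ProbabilityTheory.memLp_id_gaussianReal 2).sub (memLp_const m))
  obtain ⟨i2, e2⟩ := gauss_transfer m v hv _ hc
  have e2' : ∫ x, (x - m) ^ 2 * gauss x m v = v := by
    rw [e2]
    have := ProbabilityTheory.variance_id_gaussianReal (μ := m) (v := v.toNNReal)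
    rw [ProbabilityTheory.variance_eq_integral (by fun_prop)] at this
    simpa [ProbabilityTheory.integral_id_gaussianReal, hv.le] using this
  have key : (fun x => (x - c) ^ 2 * gauss x m v) =
      fun x => (x - m) ^ 2 * gauss x m v + (2 * (m - c) * (x * gauss x m v)
        + (c ^ 2 - m ^ 2) * gauss x m v) := by
    funext x; ring
  rw [key]
  have j : Integrable (fun x => 2 * (m - c) * (x * gauss x m v)
      + (c ^ 2 - m ^ 2) * gauss x m v) := (i1.const_mul (2 * (m - c))).add (i0.const_mul (c ^ 2 - m ^ 2))
  refine ⟨i2.add j, ?_⟩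
  rw [integral_add i2 j, integral_add (i1.const_mul _) (i0.const_mul _), integral_const_mul,
    integral_const_mul, e0, e1, e2']
  ring

lemma gauss_mul (s ω ω0 v v0 : ℝ) (hv : 0 < v) (hv0 : 0 < v0) :
    gauss s ω v * gauss ω ω0 v0 =
      gauss s ω0 (v0 + v) * gauss ω ((v0 * s + v * ω0) / (v0 + v)) (v0 * v / (v0 + v)) := by
  unfold gauss
  have hs : 0 < v0 + v := by positivity
  rw [mul_mul_mul_comm, mul_mul_mul_comm (√(2 * π * (v0 + v)))⁻¹, ← Real.exp_add, ← Real.exp_add,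
    ← mul_inv, ← mul_inv, ← Real.sqrt_mul (by positivity), ← Real.sqrt_mul (by positivity)]
  have e1 : 2 * π * v * (2 * π * v0) = 2 * π * (v0 + v) * (2 * π * (v0 * v / (v0 + v))) := by
    field_simp
  have e2 : -(s - ω) ^ 2 / (2 * v) + -(ω - ω0) ^ 2 / (2 * v0) =
      -(s - ω0) ^ 2 / (2 * (v0 + v)) +
        -(ω - (v0 * s + v * ω0) / (v0 + v)) ^ 2 / (2 * (v0 * v / (v0 + v))) := by
    field_simp; ring
  rw [e1, e2]

/-- joint density -/
lemma joint (ω0 v0 vH vL h s ω : ℝ) (hv0 : 0 < v0) (hvH : 0 < vH) (hvL : 0 < vL) :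
    mixDens h vH vL s ω * gauss ω ω0 v0 =
      h * gauss s ω0 (v0 + vH) *
        gauss ω ((v0 * s + vH * ω0) / (v0 + vH)) (v0 * vH / (v0 + vH)) +
      (1 - h) * gauss s ω0 (v0 + vL) *
        gauss ω ((v0 * s + vL * ω0) / (v0 + vL)) (v0 * vL / (v0 + vL)) := by
  unfold mixDens
  rw [add_mul, mul_assoc, mul_assoc, gauss_mul _ _ _ _ _ hvH hv0, gauss_mul _ _ _ _ _ hvL hv0]
  ring

lemma aMix_eq (ω0 v0 vH vL h s : ℝ) (hv0 : 0 < v0) (hvH : 0 < vH) (hvL : 0 < vL) :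
    aMix ω0 v0 vH vL h s =
      (h * gauss s ω0 (v0 + vH) * ((v0 * s + vH * ω0) / (v0 + vH)) +
        (1 - h) * gauss s ω0 (v0 + vL) * ((v0 * s + vL * ω0) / (v0 + vL))) /
      (h * gauss s ω0 (v0 + vH) + (1 - h) * gauss s ω0 (v0 + vL)) := by
  unfold aMix
  simp only [joint ω0 v0 vH vL h s _ hv0 hvH hvL]
  have tH : 0 < v0 * vH / (v0 + vH) := by positivity
  have tL : 0 < v0 * vL / (v0 + vL) := by positivity
  obtain ⟨i0, e0⟩ := gauss_int0 ((v0 * s + vH * ω0) / (v0 + vH)) _ tH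
  obtain ⟨j0, f0⟩ := gauss_int0 ((v0 * s + vL * ω0) / (v0 + vL)) _ tL
  obtain ⟨i1, e1⟩ := gauss_int1 ((v0 * s + vH * ω0) / (v0 + vH)) _ tH
  obtain ⟨j1, f1⟩ := gauss_int1 ((v0 * s + vL * ω0) / (v0 + vL)) _ tL
  simp only [mul_add, mul_left_comm _ (_ * gauss s ω0 _) _]
  rw [integral_add (i0.const_mul _) (j0.const_mul _), integral_add (i1.const_mul _) (j1.const_mul _)]
  simp only [integral_const_mul, e0, f0, e1, f1, mul_one]

lemma inner (ω0 v0 vH vL h s a : ℝ) (hv0 : 0 < v0) (hvH : 0 < vH) (hvL : 0 < vL) :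
    Integrable (fun ω => (ω - a) ^ 2 * (mixDens h vH vL s ω * gauss ω ω0 v0)) ∧
    ∫ ω, (ω - a) ^ 2 * (mixDens h vH vL s ω * gauss ω ω0 v0) =
      h * gauss s ω0 (v0 + vH) *
        (v0 * vH / (v0 + vH) + ((v0 * s + vH * ω0) / (v0 + vH) - a) ^ 2) +
      (1 - h) * gauss s ω0 (v0 + vL) *
        (v0 * vL / (v0 + vL) + ((v0 * s + vL * ω0) / (v0 + vL) - a) ^ 2) := by
  simp only [joint ω0 v0 vH vL h s _ hv0 hvH hvL]
  have tH : 0 < v0 * vH / (v0 + vH) := by positivity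
  have tL : 0 < v0 * vL / (v0 + vL) := by positivity
  obtain ⟨i1, e1⟩ := gauss_int2 ((v0 * s + vH * ω0) / (v0 + vH)) _ tH a
  obtain ⟨j1, f1⟩ := gauss_int2 ((v0 * s + vL * ω0) / (v0 + vL)) _ tL a
  simp only [mul_add ((_ - a) ^ 2), mul_left_comm _ (_ * gauss s ω0 _) _]
  refine ⟨(i1.const_mul _).add (j1.const_mul _), ?_⟩
  rw [integral_add (i1.const_mul _) (j1.const_mul _)]
  simp only [integral_const_mul, e1, f1]

lemma wavg (p q x y : ℝ) (hp : 0 < p) (hq : 0 < q) :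
    (x - (p * x + q * y) / (p + q)) ^ 2 ≤ (x - y) ^ 2 ∧
    (y - (p * x + q * y) / (p + q)) ^ 2 ≤ (x - y) ^ 2 := by
  have h1 : x - (p * x + q * y) / (p + q) = (q / (p + q)) * (x - y) := by field_simp; ring
  have h2 : y - (p * x + q * y) / (p + q) = -(p / (p + q)) * (x - y) := by field_simp; ring
  have a1 : q / (p + q) ≤ 1 := by rw [div_le_one (by positivity)]; linarith
  have a2 : p / (p + q) ≤ 1 := by rw [div_le_one (by positivity)]; linarith
  have b1 : 0 ≤ q / (p + q) := by positivity
  have b2 : 0 ≤ p / (p + q) := by positivity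
  rw [h1, h2, mul_pow, mul_pow, neg_sq]
  exact ⟨mul_le_of_le_one_left (sq_nonneg _) (pow_le_one₀ b1 a1),
    mul_le_of_le_one_left (sq_nonneg _) (pow_le_one₀ b2 a2)⟩

theorem stmt_7 (ω0 v0 vH vL h : ℝ) (hv0 : 0 < v0) (hvH : 0 < vH) (hHL : vH < vL)
    (hh0 : 0 < h) (hh1 : h < 1) :
    v0 * vH / (v0 + vH) <
      ∫ ω : ℝ,
        (∫ s : ℝ, (ω - aMix ω0 v0 vH vL h s) ^ 2 * mixDens h vH vL s ω) *
          gauss ω ω0 v0 := by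
  have hvL : 0 < vL := hvH.trans hHL
  have h1 : 0 < 1 - h := by linarith
  set a := aMix ω0 v0 vH vL h with ha
  have ha' : a = fun s => _ := funext fun s => aMix_eq ω0 v0 vH vL h s hv0 hvH hvL
  have hgH : Measurable fun s => gauss s ω0 (v0 + vH) :=
    gauss_meas measurable_id measurable_const
  have hgL : Measurable fun s => gauss s ω0 (v0 + vL) :=
    gauss_meas measurable_id measurable_const
  have ma : Measurable a := by
    rw [ha']; fun_prop
  let F : ℝ × ℝ → ℝ := fun p =>
    (p.2 - a p.1) ^ 2 * (mixDens h vH vL p.1 p.2 * gauss p.2 ω0 v0)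
  have mF : Measurable F := by
    have m1 : Measurable fun p : ℝ × ℝ => gauss p.1 p.2 vH :=
      gauss_meas measurable_fst measurable_snd
    have m2 : Measurable fun p : ℝ × ℝ => gauss p.1 p.2 vL :=
      gauss_meas measurable_fst measurable_snd
    have m3 : Measurable fun p : ℝ × ℝ => gauss p.2 ω0 v0 :=
      gauss_meas measurable_snd measurable_const
    unfold F mixDens
    fun_prop
  have Fnn : ∀ p, 0 ≤ F p := by
    intro p
    have := gauss_pos p.1 p.2 vH hvH
    have := gauss_pos p.1 p.2 vL hvL
    have := gauss_pos p.2 ω0 v0 hv0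
    unfold F mixDens
    positivity
  have hin := fun s => inner ω0 v0 vH vL h s (a s) hv0 hvH hvL
  have tH : 0 < v0 * vH / (v0 + vH) := by positivity
  have tL : 0 < v0 * vL / (v0 + vL) := by positivity
  obtain ⟨iH, eH⟩ := gauss_int0 ω0 (v0 + vH) (by positivity)
  obtain ⟨iL, eL⟩ := gauss_int0 ω0 (v0 + vL) (by positivity)
  obtain ⟨kH, -⟩ := gauss_int2 ω0 (v0 + vH) (by positivity) ω0
  obtain ⟨kL, -⟩ := gauss_int2 ω0 (v0 + vL) (by positivity) ω0
  have hG : Integrable fun s => ∫ ω, F (s, ω) := by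
    set c := v0 / (v0 + vH) - v0 / (v0 + vL) with hc
    have hb := (((iH.const_mul (v0 * vH / (v0 + vH))).add (kH.const_mul (c ^ 2))).const_mul h).add
      (((iL.const_mul (v0 * vL / (v0 + vL))).add (kL.const_mul (c ^ 2))).const_mul (1 - h))
    refine hb.mono' mF.stronglyMeasurable.integral_prod_right'.aestronglyMeasurable
      (Filter.Eventually.of_forall fun s => ?_)
    rw [Real.norm_of_nonneg (integral_nonneg fun ω => Fnn _)]
    refine (hin s).2.trans_le ?_
    have pH := gauss_pos s ω0 (v0 + vH) (by positivity)
    have pL := gauss_pos s ω0 (v0 + vL) (by positivity)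
    obtain ⟨w1, w2⟩ := wavg (h * gauss s ω0 (v0 + vH)) ((1 - h) * gauss s ω0 (v0 + vL))
      ((v0 * s + vH * ω0) / (v0 + vH)) ((v0 * s + vL * ω0) / (v0 + vL))
      (by positivity) (by positivity)
    have has : a s = _ := congrFun ha' s
    have hd : (v0 * s + vH * ω0) / (v0 + vH) - (v0 * s + vL * ω0) / (v0 + vL) = c * (s - ω0) := by
      rw [hc]; field_simp; ring
    rw [← has, hd] at w1 w2
    calc _ ≤ h * gauss s ω0 (v0 + vH) * (v0 * vH / (v0 + vH) + (c * (s - ω0)) ^ 2) +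
          (1 - h) * gauss s ω0 (v0 + vL) * (v0 * vL / (v0 + vL) + (c * (s - ω0)) ^ 2) := by
          gcongr
      _ = _ := by simp only [Pi.add_apply]; ring
  have iF : Integrable F (volume.prod volume) := by
    rw [integrable_prod_iff mF.aestronglyMeasurable]
    refine ⟨Filter.Eventually.of_forall fun s => (hin s).1, ?_⟩
    simpa only [Real.norm_of_nonneg (Fnn _)] using hG
  have swap : (∫ ω : ℝ, (∫ s : ℝ, (ω - a s) ^ 2 * mixDens h vH vL s ω) * gauss ω ω0 v0)
      = ∫ s, ∫ ω, F (s, ω) := by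
    rw [integral_integral_swap (f := fun s ω => F (s, ω)) iF]
    congr 1; funext ω
    rw [← integral_mul_const]
    congr 1; funext s
    simp only [F]; ring
  rw [swap]
  have hb := (iH.const_mul (h * (v0 * vH / (v0 + vH)))).add
    (iL.const_mul ((1 - h) * (v0 * vL / (v0 + vL))))
  have hle : h * (v0 * vH / (v0 + vH)) + (1 - h) * (v0 * vL / (v0 + vL))
      ≤ ∫ s, ∫ ω, F (s, ω) := by
    have := integral_mono hb hG (fun s => ?_)
    · simp only [Pi.add_apply] at this
      rw [integral_add (iH.const_mul _) (iL.const_mul _), integral_const_mul,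
        integral_const_mul, eH, eL, mul_one, mul_one] at this
      exact this
    · refine le_of_le_of_eq ?_ (hin s).2.symm
      have pH := gauss_pos s ω0 (v0 + vH) (by positivity)
      have pL := gauss_pos s ω0 (v0 + vL) (by positivity)
      have q1 := mul_nonneg (mul_pos hh0 pH).le
        (sq_nonneg ((v0 * s + vH * ω0) / (v0 + vH) - a s))
      have q2 := mul_nonneg (mul_pos h1 pL).le
        (sq_nonneg ((v0 * s + vL * ω0) / (v0 + vL) - a s))
      simp only [Pi.add_apply]
      linarith
  have hlt : v0 * vH / (v0 + vH) < v0 * vL / (v0 + vL) := by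
    rw [div_lt_div_iff₀ (by positivity) (by positivity)]
    have := mul_pos (mul_pos hv0 hv0) (sub_pos.2 hHL)
    linarith
  have := mul_pos h1 (sub_pos.2 hlt)
  linarith
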